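/- If ρ₁, ρ₂, ρ₃ > 0 do not satisfy the triangle inequality (i.e., ρ₁ > ρ₂ + ρ₃ or ρ₁ < |ρ₂ - ρ₃|), then for all integers ℓ₁, ℓ₂, the integral ∫₀^∞ J_{ℓ₁}(ρ₁λ) J_{ℓ₂}(ρ₂λ) J_{ℓ₁+ℓ₂}(ρ₃λ) λ dλ equals 0. -/

import Mathlib

open Real MeasureTheory Filter Topology Complex

/-- Bessel function of the first kind of integer order, via the standard
integral representation `J_n(x) = (1/π) ∫₀^π cos (n θ - x sin θ) dθ`. -/
noncomputable def besselJ (n : ℤ) (x : ℝ) : ℝ :=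
  (1 / Real.pi) * ∫ θ in (0:ℝ)..Real.pi, Real.cos (n * θ - x * Real.sin θ)

lemma bJ_abs_le (n : ℤ) (x : ℝ) : |besselJ n x| ≤ 1 := by
  unfold besselJ
  have h := intervalIntegral.norm_integral_le_of_norm_le_const (a := (0:ℝ)) (b := Real.pi) (C := 1)
    (f := fun θ => Real.cos (n * θ - x * Real.sin θ)) (fun θ _ => Real.abs_cos_le_one _)
  rw [Real.norm_eq_abs, sub_zero, abs_of_pos Real.pi_pos, one_mul] at h
  rw [abs_mul, abs_of_pos (by positivity : 0 < 1 / Real.pi), one_div_mul_eq_div,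
    div_le_one Real.pi_pos]
  exact h

lemma bJ_int (f : ℝ → ℝ) (hf : Continuous f) (a b : ℝ) : IntervalIntegrable f volume a b :=
  hf.intervalIntegrable a b

lemma bJ_deriv (n : ℤ) (x : ℝ) :
    HasDerivAt (besselJ n) ((besselJ (n-1) x - besselJ (n+1) x) / 2) x := by
  have h := (intervalIntegral.hasDerivAt_integral_of_dominated_loc_of_deriv_le
    (μ := volume) (a := 0) (b := Real.pi) (s := Set.univ) (bound := fun _ => 1)
    (F := fun (x θ : ℝ) => Real.cos (n * θ - x * Real.sin θ))
    (F' := fun (x θ : ℝ) => Real.sin (n * θ - x * Real.sin θ) * Real.sin θ)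
    (x₀ := x) Filter.univ_mem
    (Eventually.of_forall fun y => (by fun_prop : Continuous _).aestronglyMeasurable)
    (bJ_int _ (by fun_prop) _ _)
    ((by fun_prop : Continuous _).aestronglyMeasurable)
    (Eventually.of_forall fun θ _ y _ => by
      rw [norm_mul]
      exact mul_le_one₀ (Real.abs_sin_le_one _) (norm_nonneg _) (Real.abs_sin_le_one _))
    (bJ_int _ (by fun_prop) _ _)
    (Eventually.of_forall fun θ _ y _ => by
      have := (((hasDerivAt_id y).mul_const (Real.sin θ)).const_sub ((n:ℝ) * θ)).cos
      exact this.congr_deriv (by simp))).2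
  have h2 := h.const_mul (1 / Real.pi)
  refine HasDerivAt.congr_deriv (f := besselJ n) h2 ?_
  symm
  unfold besselJ
  rw [← mul_sub, ← intervalIntegral.integral_sub (bJ_int _ (by fun_prop) _ _)
    (bJ_int _ (by fun_prop) _ _), mul_div_assoc, ← intervalIntegral.integral_div]
  congr 1
  apply intervalIntegral.integral_congr
  intro θ _
  simp only
  push_cast
  rw [show ((n:ℝ) - 1) * θ - x * Real.sin θ = (n * θ - x * Real.sin θ) - θ by ring,
    show ((n:ℝ) + 1) * θ - x * Real.sin θ = (n * θ - x * Real.sin θ) + θ by ring,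
    Real.cos_sub, Real.cos_add]
  ring

lemma bJ_rec (n : ℤ) (x : ℝ) :
    x * (besselJ (n-1) x + besselJ (n+1) x) = 2 * n * besselJ n x := by
  have h : ∫ θ in (0:ℝ)..Real.pi, Real.cos (n * θ - x * Real.sin θ) * (n - x * Real.cos θ) = 0 := by
    rw [intervalIntegral.integral_eq_sub_of_hasDerivAt
      (f := fun θ : ℝ => Real.sin (n * θ - x * Real.sin θ))]
    · simp [Real.sin_int_mul_pi]
    · intro θ _
      have := (((hasDerivAt_id θ).const_mul (n:ℝ)).sub ((Real.hasDerivAt_sin θ).const_mul x)).sin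
      exact this.congr_deriv (by simp)
    · exact bJ_int _ (by fun_prop) _ _
  have h2 : x * (besselJ (n-1) x + besselJ (n+1) x) - 2 * n * besselJ n x
      = (1 / Real.pi) * (-2 * ∫ θ in (0:ℝ)..Real.pi,
        Real.cos (n * θ - x * Real.sin θ) * (n - x * Real.cos θ)) := by
    unfold besselJ
    rw [← mul_add, ← intervalIntegral.integral_add (bJ_int _ (by fun_prop) _ _)
      (bJ_int _ (by fun_prop) _ _), mul_left_comm, mul_left_comm (2 * (n:ℝ)), ← mul_sub,
      ← intervalIntegral.integral_const_mul x, ← intervalIntegral.integral_const_mul (2 * (n:ℝ)),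
      ← intervalIntegral.integral_sub (bJ_int _ (by fun_prop) _ _)
      (bJ_int _ (by fun_prop) _ _), ← intervalIntegral.integral_const_mul (-2)]
    congr 1
    apply intervalIntegral.integral_congr
    intro θ _
    simp only
    push_cast
    rw [show ((n:ℝ) - 1) * θ - x * Real.sin θ = (n * θ - x * Real.sin θ) - θ by ring,
      show ((n:ℝ) + 1) * θ - x * Real.sin θ = (n * θ - x * Real.sin θ) + θ by ring,
      Real.cos_sub, Real.cos_add]
    ring
  rw [h] at h2
  linarith

lemma bJ_neg (n : ℤ) (x : ℝ) : besselJ (-n) x = (-1) ^ n * besselJ n x := by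
  unfold besselJ
  rw [mul_left_comm, ← intervalIntegral.integral_const_mul ((-1) ^ n)]
  congr 1
  have h := intervalIntegral.integral_comp_sub_left (a := 0) (b := Real.pi)
    (fun θ : ℝ => Real.cos (((-n : ℤ):ℝ) * θ - x * Real.sin θ)) Real.pi
  simp only [sub_self, sub_zero] at h
  rw [← h]
  apply intervalIntegral.integral_congr
  intro θ _
  simp only
  push_cast
  rw [Real.sin_pi_sub, show -(n:ℝ) * (Real.pi - θ) - x * Real.sin θ
    = (n * θ - x * Real.sin θ) - n * Real.pi by ring, Real.cos_sub_int_mul_pi]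

lemma bJ_cont (n : ℤ) : Continuous (besselJ n) :=
  continuous_iff_continuousAt.2 fun x => (bJ_deriv n x).continuousAt

lemma bJ_deriv1 (n : ℤ) {x : ℝ} (hx : x ≠ 0) :
    HasDerivAt (besselJ n) (n / x * besselJ n x - besselJ (n+1) x) x := by
  refine (bJ_deriv n x).congr_deriv ?_
  have := bJ_rec n x
  field_simp
  linarith

lemma bJ_deriv2 (n : ℤ) {x : ℝ} (hx : x ≠ 0) :
    HasDerivAt (besselJ (n+1)) (besselJ n x - (n+1) / x * besselJ (n+1) x) x := by
  refine (bJ_deriv (n+1) x).congr_deriv ?_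
  have := bJ_rec (n+1) x
  simp only [add_sub_cancel_right] at this ⊢
  push_cast at this
  field_simp
  linarith

noncomputable def bE (n : ℤ) (x : ℝ) : ℝ :=
  x * (besselJ n x ^ 2 + besselJ (n+1) x ^ 2) - (2 * n + 1) * (besselJ n x * besselJ (n+1) x)

lemma bE_deriv (n : ℤ) {x : ℝ} (hx : x ≠ 0) :
    HasDerivAt (bE n) ((2*n+1) / x * (besselJ n x * besselJ (n+1) x)) x := by
  have h1 := bJ_deriv1 n hx
  have h2 := bJ_deriv2 n hx
  have h := ((hasDerivAt_id x).mul ((h1.pow 2).add (h2.pow 2))).sub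
    ((h1.mul h2).const_mul (2 * (n:ℝ) + 1))
  refine HasDerivAt.congr_deriv (f := bE n) h ?_
  simp
  field_simp
  ring

lemma bE_lower (n : ℤ) {x : ℝ} (hx : |2 * (n:ℝ) + 1| ≤ x) :
    x / 2 * (besselJ n x ^ 2 + besselJ (n+1) x ^ 2) ≤ bE n x := by
  unfold bE
  obtain ⟨h1, h2⟩ := abs_le.1 hx
  nlinarith [mul_nonneg (by linarith : 0 ≤ x + (2 * (n:ℝ) + 1)) (sq_nonneg (besselJ n x - besselJ (n+1) x)),
    mul_nonneg (by linarith : 0 ≤ x - (2 * (n:ℝ) + 1)) (sq_nonneg (besselJ n x + besselJ (n+1) x))]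

lemma one_le_m (n : ℤ) : 1 ≤ |2 * (n:ℝ) + 1| := by
  have : (1:ℤ) ≤ |2 * n + 1| := Int.one_le_abs (by omega)
  exact_mod_cast this

lemma bE_anti (n : ℤ) : AntitoneOn (fun x => bE n x * Real.exp (|2 * (n:ℝ) + 1| / x))
    (Set.Ici |2 * (n:ℝ) + 1|) := by
  have hm := one_le_m n
  set m := |2 * (n:ℝ) + 1| with hmd
  have hd : ∀ x, m ≤ x → HasDerivAt (fun x => bE n x * Real.exp (m / x))
      (((2*n+1) / x * (besselJ n x * besselJ (n+1) x)) * Real.exp (m / x)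
        + bE n x * (Real.exp (m / x) * (m * (-(x^2)⁻¹)))) x := by
    intro x hx
    have hx0 : x ≠ 0 := by linarith
    exact (bE_deriv n hx0).mul ((hasDerivAt_inv hx0).const_mul m).exp
  apply antitoneOn_of_deriv_nonpos (convex_Ici m)
  · exact fun x hx => (hd x hx).continuousAt.continuousWithinAt
  · exact fun x hx => (hd x (interior_subset hx)).differentiableAt.differentiableWithinAt
  · intro x hx
    have hx : m ≤ x := interior_subset hx
    rw [(hd x hx).deriv]
    have hx0 : 0 < x := by linarith
    have hl := bE_lower n hx
    have e : ((2*n+1) / x * (besselJ n x * besselJ (n+1) x)) * Real.exp (m / x)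
        + bE n x * (Real.exp (m / x) * (m * (-(x^2)⁻¹)))
        = - (Real.exp (m / x) / x^2 * (m * bE n x - (2*n+1) * x * (besselJ n x * besselJ (n+1) x))) := by
      field_simp
      ring
    rw [e]
    apply neg_nonpos_of_nonneg
    apply mul_nonneg (by positivity)
    have h1 : m * (x / 2 * (besselJ n x ^ 2 + besselJ (n+1) x ^ 2)) ≤ m * bE n x :=
      mul_le_mul_of_nonneg_left hl (by linarith)
    obtain ⟨h3, h4⟩ := abs_le.1 hmd.symm.le
    have h5 := mul_nonneg hx0.le (mul_nonneg (by linarith : 0 ≤ m + (2 * (n:ℝ) + 1)) (sq_nonneg (besselJ n x - besselJ (n+1) x)))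
    have h6 := mul_nonneg hx0.le (mul_nonneg (by linarith : 0 ≤ m - (2 * (n:ℝ) + 1)) (sq_nonneg (besselJ n x + besselJ (n+1) x)))
    nlinarith

lemma bJ_sq (n : ℤ) (x : ℝ) : besselJ n x ^ 2 ≤ 1 := by
  rw [← sq_abs]; exact pow_le_one₀ (abs_nonneg _) (bJ_abs_le n x)

lemma bJ_decay_sq (n : ℤ) {x : ℝ} (hx : 0 < x) :
    x * besselJ n x ^ 2 ≤ 18 * |2 * (n:ℝ) + 1| := by
  have hm := one_le_m n
  have hanti := bE_anti n
  set m := |2 * (n:ℝ) + 1| with hmd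
  have hs := bJ_sq n x
  rcases le_total x m with h | h
  · nlinarith [sq_nonneg (besselJ n x)]
  · have h1 := hanti (Set.self_mem_Ici) h h
    simp only at h1
    rw [div_self (by linarith)] at h1
    have hl := bE_lower n h
    have hp : 0 ≤ bE n x := le_trans (by positivity) hl
    have h2 : bE n x ≤ bE n x * Real.exp (m / x) :=
      le_mul_of_one_le_right hp (Real.one_le_exp (by positivity))
    have h3 : bE n m ≤ 3 * m := by
      unfold bE
      have a1 := bJ_sq n m
      have a2 := bJ_sq (n+1) m
      have a3 : |(2 * (n:ℝ) + 1) * (besselJ n m * besselJ (n+1) m)| ≤ m := by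
        rw [abs_mul, abs_mul]
        exact mul_le_of_le_one_right (abs_nonneg _)
          (mul_le_one₀ (bJ_abs_le _ _) (abs_nonneg _) (bJ_abs_le _ _))
      have := (abs_le.1 a3).1
      nlinarith
    have he : Real.exp 1 ≤ 3 := by linarith [Real.exp_one_lt_d9]
    have h4 : bE n m * Real.exp 1 ≤ 3 * m * 3 :=
      mul_le_mul h3 he (Real.exp_pos _).le (by linarith)
    nlinarith [mul_nonneg hx.le (sq_nonneg (besselJ (n+1) x))]

lemma bJ_decay (n : ℤ) {x : ℝ} (hx : 0 < x) :
    |besselJ n x| ≤ 6 * (|(n:ℝ)| + 1) / √x := by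
  rw [le_div_iff₀ (Real.sqrt_pos.2 hx)]
  apply abs_le_of_sq_le_sq' _ (by positivity) |>.2
  rw [mul_pow, sq_abs, Real.sq_sqrt hx.le, mul_comm]
  have h := bJ_decay_sq n hx
  have : |2 * (n:ℝ) + 1| ≤ 2 * |(n:ℝ)| + 1 := by
    refine (abs_add_le _ _).trans ?_
    rw [abs_mul]; simp
  nlinarith [abs_nonneg (n:ℝ)]

noncomputable def bD (n : ℤ) (x : ℝ) : ℝ := (besselJ (n-1) x - besselJ (n+1) x) / 2

lemma bD_cont (n : ℤ) : Continuous (bD n) :=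
  ((bJ_cont _).sub (bJ_cont _)).div_const 2

lemma bxD_deriv (n : ℤ) {x : ℝ} (hx : x ≠ 0) :
    HasDerivAt (fun x => x * bD n x) ((n ^ 2 / x - x) * besselJ n x) x := by
  have e : (fun x => x * bD n x) = fun x => n * besselJ n x - x * besselJ (n+1) x := by
    funext y
    have := bJ_rec n y
    unfold bD
    linarith
  rw [e]
  have h := ((bJ_deriv1 n hx).const_mul (n:ℝ)).sub ((hasDerivAt_id x).mul (bJ_deriv2 n hx))
  refine HasDerivAt.congr_deriv (f := fun x => n * besselJ n x - x * besselJ (n+1) x) h ?_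
  simp
  field_simp
  ring

lemma bS_deriv (n : ℤ) (a t : ℝ) :
    HasDerivAt (fun t => besselJ n (a * t)) (a * bD n (a * t)) t := by
  have h := HasDerivAt.comp t (bJ_deriv n (a * t)) ((hasDerivAt_id t).const_mul a)
  exact HasDerivAt.congr_deriv (f := fun t => besselJ n (a * t)) h (by simp [bD]; ring)

lemma bL_deriv (n : ℤ) {a t : ℝ} (ha : a ≠ 0) (ht : t ≠ 0) :
    HasDerivAt (fun t => a * t * bD n (a * t)) ((n ^ 2 / t - a ^ 2 * t) * besselJ n (a * t)) t := by
  have h := HasDerivAt.comp t (bxD_deriv n (mul_ne_zero ha ht)) ((hasDerivAt_id t).const_mul a)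
  refine HasDerivAt.congr_deriv (f := fun t => a * t * bD n (a * t)) h ?_
  simp
  field_simp

noncomputable def bQ (a b c : ℝ) (p q r : ℤ) (t : ℝ) : ℝ :=
  besselJ p (a * t) * (b * t * bD q (b * t) * besselJ r (c * t)
      + besselJ q (b * t) * (c * t * bD r (c * t)))
    - a * t * bD p (a * t) * (besselJ q (b * t) * besselJ r (c * t))

noncomputable def bP (a b c : ℝ) (p q r : ℤ) (t : ℝ) : ℝ :=
  besselJ p (a * t) * besselJ q (b * t) * besselJ r (c * t) * t

lemma bP_cont (a b c : ℝ) (p q r : ℤ) : Continuous (bP a b c p q r) := by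
  have h1 := bJ_cont p
  have h2 := bJ_cont q
  have h3 := bJ_cont r
  unfold bP
  fun_prop

lemma bQ_cont (a b c : ℝ) (p q r : ℤ) : Continuous (bQ a b c p q r) := by
  have h1 := bJ_cont p
  have h2 := bJ_cont q
  have h3 := bJ_cont r
  have h4 := bD_cont p
  have h5 := bD_cont q
  have h6 := bD_cont r
  unfold bQ
  fun_prop

lemma bQ_deriv {a b c : ℝ} (ha : a ≠ 0) (hb : b ≠ 0) (hc : c ≠ 0) (p q r : ℤ) (hpqr : p + q + r = 0)
    {t : ℝ} (ht : t ≠ 0) :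
    HasDerivAt (bQ a b c p q r) ((a^2 - b^2 - c^2) * bP a b c p q r t
      - b * c * (bP a b c p (q+1) (r-1) t + bP a b c p (q-1) (r+1) t)) t := by
  have h := ((bS_deriv p a t).mul (((bL_deriv q hb ht).mul (bS_deriv r c t)).add
    ((bS_deriv q b t).mul (bL_deriv r hc ht)))).sub
    ((bL_deriv p ha ht).mul ((bS_deriv q b t).mul (bS_deriv r c t)))
  refine HasDerivAt.congr_deriv (f := bQ a b c p q r) h ?_
  have hp : (p:ℝ) = -(q + r) := by
    have : p = -(q + r) := by omega
    rw [this]; push_cast; ring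
  have e1 := bJ_rec q (b * t)
  have e2 := bJ_rec r (c * t)
  have e3 : (b * t * (besselJ (q-1) (b*t) + besselJ (q+1) (b*t))) *
    (c * t * (besselJ (r-1) (c*t) + besselJ (r+1) (c*t))) =
    (2 * q * besselJ q (b*t)) * (2 * r * besselJ r (c * t)) := by rw [e1, e2]
  simp only [Pi.add_apply, Pi.mul_apply, bP]
  rw [hp]
  unfold bD
  generalize besselJ p (a * t) = f at *
  generalize besselJ (p-1) (a * t) = f1 at *
  generalize besselJ (p+1) (a * t) = f2 at *
  generalize besselJ q (b * t) = g at *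
  generalize besselJ (q-1) (b * t) = g1 at *
  generalize besselJ (q+1) (b * t) = g2 at *
  generalize besselJ r (c * t) = k at *
  generalize besselJ (r-1) (c * t) = k1 at *
  generalize besselJ (r+1) (c * t) = k2 at *
  clear h
  field_simp
  linear_combination (2 * f) * e3

lemma bI_rec {a b c : ℝ} (ha : a ≠ 0) (hb : b ≠ 0) (hc : c ≠ 0) (p q r : ℤ) (hpqr : p + q + r = 0)
    {T : ℝ} (hT : 0 ≤ T) :
    (a^2 - b^2 - c^2) * (∫ t in (0:ℝ)..T, bP a b c p q r t)
      - b * c * ((∫ t in (0:ℝ)..T, bP a b c p (q+1) (r-1) t)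
        + ∫ t in (0:ℝ)..T, bP a b c p (q-1) (r+1) t) = bQ a b c p q r T := by
  have i1 := fun q r => bJ_int _ (bP_cont a b c p q r) 0 T
  have h := intervalIntegral.integral_eq_sub_of_hasDerivAt_of_le hT
    (bQ_cont a b c p q r).continuousOn
    (fun t ht => bQ_deriv ha hb hc p q r hpqr (ne_of_gt ht.1))
    (((i1 q r).const_mul _).sub (((i1 (q+1) (r-1)).add (i1 (q-1) (r+1))).const_mul _))
  have h0 : bQ a b c p q r 0 = 0 := by simp [bQ]
  rw [h0, sub_zero] at h
  rw [← h, intervalIntegral.integral_sub ((i1 q r).const_mul _)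
    (((i1 (q+1) (r-1)).add (i1 (q-1) (r+1))).const_mul _),
    intervalIntegral.integral_const_mul, intervalIntegral.integral_const_mul,
    intervalIntegral.integral_add (i1 (q+1) (r-1)) (i1 (q-1) (r+1))]

lemma bI_bound (a b c : ℝ) (p q r : ℤ) {T : ℝ} (hT : 0 ≤ T) :
    |∫ t in (0:ℝ)..T, bP a b c p q r t| ≤ T * T := by
  have h := intervalIntegral.norm_integral_le_of_norm_le_const (a := (0:ℝ)) (b := T) (C := T)
    (f := bP a b c p q r) (fun t ht => by
      rw [Set.uIoc_of_le hT] at ht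
      unfold bP
      rw [norm_mul, norm_mul, norm_mul, Real.norm_eq_abs t, abs_of_pos ht.1]
      have := mul_le_one₀ (mul_le_one₀ (bJ_abs_le p (a*t)) (abs_nonneg _) (bJ_abs_le q (b*t)))
        (abs_nonneg _) (bJ_abs_le r (c*t))
      exact (mul_le_of_le_one_left ht.1.le this).trans ht.2)
  rwa [sub_zero, abs_of_nonneg hT] at h

lemma bS_decay {a : ℝ} (ha : 0 < a) : ∃ M, 0 ≤ M ∧ ∀ (n : ℤ) (t : ℝ), 0 < t →
    |besselJ n (a * t)| ≤ M * (|(n:ℝ)| + 2) / √t ∧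
    |a * t * bD n (a * t)| ≤ M * (|(n:ℝ)| + 2) / √t * t := by
  have hs : 0 < √a := Real.sqrt_pos.2 ha
  have key : ∀ (n : ℤ) (t : ℝ), 0 < t → |besselJ n (a * t)| ≤ 6 / √a * (|(n:ℝ)| + 1) / √t := by
    intro n t ht
    refine (bJ_decay n (mul_pos ha ht)).trans (le_of_eq ?_)
    rw [Real.sqrt_mul ha.le]
    field_simp
  refine ⟨6 / √a * (1 + a), by positivity, fun n t ht => ⟨?_, ?_⟩⟩
  · refine (key n t ht).trans ?_
    gcongr
    · exact le_mul_of_one_le_right (by positivity) (by linarith)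
    · norm_num
  · have h1 := key (n-1) t ht
    have h2 := key (n+1) t ht
    have h3 : |((n-1:ℤ):ℝ)| ≤ |(n:ℝ)| + 1 := by
      push_cast; exact (abs_sub _ _).trans (by simp)
    have h4 : |((n+1:ℤ):ℝ)| ≤ |(n:ℝ)| + 1 := by
      push_cast; exact (abs_add_le _ _).trans (by simp)
    have h5 : |bD n (a * t)| ≤ 6 / √a * (|(n:ℝ)| + 2) / √t := by
      have g1 : 6 / √a * (|((n-1:ℤ):ℝ)| + 1) / √t ≤ 6 / √a * (|(n:ℝ)| + 2) / √t := by
        gcongr 6 / √a * ?_ / √t; linarith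
      have g2 : 6 / √a * (|((n+1:ℤ):ℝ)| + 1) / √t ≤ 6 / √a * (|(n:ℝ)| + 2) / √t := by
        gcongr 6 / √a * ?_ / √t; linarith
      unfold bD
      rw [abs_div, abs_two, div_le_iff₀ two_pos]
      have := abs_sub (besselJ (n-1) (a*t)) (besselJ (n+1) (a*t))
      linarith
    rw [abs_mul, abs_of_pos (mul_pos ha ht)]
    calc a * t * |bD n (a * t)| ≤ a * t * (6 / √a * (|(n:ℝ)| + 2) / √t) := by gcongr
      _ ≤ (1 + a) * t * (6 / √a * (|(n:ℝ)| + 2) / √t) := by gcongr; linarith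
      _ = _ := by ring

lemma bQ_decay {a b c : ℝ} (ha : 0 < a) (hb : 0 < b) (hc : 0 < c) : ∃ M, 0 ≤ M ∧
    ∀ (p q r : ℤ) (t : ℝ), 0 < t → |bQ a b c p q r t| ≤
      M * ((|(p:ℝ)| + 2) * (|(q:ℝ)| + 2) * (|(r:ℝ)| + 2)) / √t := by
  obtain ⟨A, hA, h1⟩ := bS_decay ha
  obtain ⟨B, hB, h2⟩ := bS_decay hb
  obtain ⟨C, hC, h3⟩ := bS_decay hc
  refine ⟨3 * (A * B * C), by positivity, fun p q r t ht => ?_⟩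
  obtain ⟨f1, f2⟩ := h1 p t ht
  obtain ⟨g1, g2⟩ := h2 q t ht
  obtain ⟨k1, k2⟩ := h3 r t ht
  set F := A * (|(p:ℝ)| + 2) / √t with hF
  set G := B * (|(q:ℝ)| + 2) / √t with hG
  set K := C * (|(r:ℝ)| + 2) / √t with hK
  have hF0 : 0 ≤ F := by positivity
  have hG0 : 0 ≤ G := by positivity
  have hK0 : 0 ≤ K := by positivity
  have e : 3 * (A * B * C) * ((|(p:ℝ)| + 2) * (|(q:ℝ)| + 2) * (|(r:ℝ)| + 2)) / √t
      = 3 * (F * G * K * t) := by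
    rw [hF, hG, hK]
    have : √t ≠ 0 := (Real.sqrt_pos.2 ht).ne'
    have h : t = √t * √t := (Real.mul_self_sqrt ht.le).symm
    field_simp
    rw [Real.sq_sqrt ht.le]
  rw [e]
  have x1 : |besselJ p (a * t) * (b * t * bD q (b * t) * besselJ r (c * t))| ≤ F * (G * t * K) := by
    rw [abs_mul, abs_mul]; gcongr
  have x2 : |besselJ p (a * t) * (besselJ q (b * t) * (c * t * bD r (c * t)))| ≤ F * (G * (K * t)) := by
    rw [abs_mul, abs_mul (besselJ q (b * t))]; gcongr
  have x3 : |a * t * bD p (a * t) * (besselJ q (b * t) * besselJ r (c * t))| ≤ F * t * (G * K) := by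
    rw [abs_mul, abs_mul (besselJ q (b * t))]; gcongr
  unfold bQ
  rw [mul_add]
  refine (abs_sub _ _).trans ?_
  have := abs_add_le (besselJ p (a * t) * (b * t * bD q (b * t) * besselJ r (c * t)))
    (besselJ p (a * t) * (besselJ q (b * t) * (c * t * bD r (c * t))))
  linarith

lemma weight_bound (δ : ℝ) (h0 : 0 < δ) (h1 : δ < 1) (q r : ℤ) : ∃ K, 0 ≤ K ∧ ∀ k : ℤ,
    (|((q + k : ℤ):ℝ)| + 2) * (|((r - k : ℤ):ℝ)| + 2) * δ ^ k.natAbs ≤ K := by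
  have ht := tendsto_pow_const_mul_const_pow_of_abs_lt_one 2 (r := δ) (by rwa [abs_of_pos h0])
  obtain ⟨K, hK⟩ := ht.bddAbove_range
  have hK' : ∀ n : ℕ, (n:ℝ)^2 * δ ^ n ≤ K := fun n => hK ⟨n, rfl⟩
  have hK0 : 0 ≤ K := by simpa using hK' 0
  set N := |(q:ℝ)| + |(r:ℝ)| + 2 with hN
  have hN0 : 0 ≤ N := by positivity
  refine ⟨2 * N ^ 2 + 2 * K, by positivity, fun k => ?_⟩
  have hn : ((k.natAbs : ℕ) : ℝ) = |(k:ℝ)| := by rw [Nat.cast_natAbs, Int.cast_abs]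
  have hk := hK' k.natAbs
  rw [hn] at hk
  have a1 : |((q + k : ℤ):ℝ)| + 2 ≤ |(k:ℝ)| + N := by
    push_cast
    have := abs_add_le (q:ℝ) k
    linarith [abs_nonneg (r:ℝ)]
  have a2 : |((r - k : ℤ):ℝ)| + 2 ≤ |(k:ℝ)| + N := by
    push_cast
    have := abs_sub (r:ℝ) k
    linarith [abs_nonneg (q:ℝ)]
  have hd0 : 0 ≤ δ ^ k.natAbs := by positivity
  have hd1 : δ ^ k.natAbs ≤ 1 := pow_le_one₀ h0.le h1.le
  calc _ ≤ (|(k:ℝ)| + N) * (|(k:ℝ)| + N) * δ ^ k.natAbs := by gcongr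
    _ ≤ (2 * N ^ 2 + 2 * |(k:ℝ)| ^ 2) * δ ^ k.natAbs := by
      gcongr
      nlinarith [sq_nonneg (|(k:ℝ)| - N)]
    _ = 2 * N ^ 2 * δ ^ k.natAbs + 2 * (|(k:ℝ)| ^ 2 * δ ^ k.natAbs) := by ring
    _ ≤ 2 * N ^ 2 * 1 + 2 * K := by gcongr
    _ = _ := by ring

lemma sup_arg (A B δ L Y : ℝ) (hB : 0 < B) (h0 : 0 < δ) (h1 : δ < 1) (hAB : 2 * B / δ < A)
    (I : ℤ → ℝ) (hI : ∀ k, |I k| ≤ Y)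
    (hrec : ∀ k, |A * I k - B * (I (k+1) + I (k-1))| * δ ^ k.natAbs ≤ L) :
    |I 0| ≤ L / (A - 2 * B / δ) := by
  have hbdd : BddAbove (Set.range fun k => |I k| * δ ^ k.natAbs) := by
    refine ⟨Y, ?_⟩
    rintro _ ⟨k, rfl⟩
    exact (mul_le_of_le_one_right (abs_nonneg _) (pow_le_one₀ h0.le h1.le)).trans (hI k)
  set S := ⨆ k, |I k| * δ ^ k.natAbs with hS
  have hle : ∀ k, |I k| * δ ^ k.natAbs ≤ S := fun k => le_ciSup hbdd k
  have hA : 0 < A := lt_trans (by positivity) hAB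
  have step : ∀ k j : ℤ, j.natAbs ≤ k.natAbs + 1 → |I j| * δ ^ k.natAbs ≤ S / δ := by
    intro k j hj
    rw [le_div_iff₀ h0, mul_assoc, ← pow_succ]
    refine le_trans ?_ (hle j)
    gcongr ?_ * ?_
    exact pow_le_pow_of_le_one h0.le h1.le hj
  have hk : ∀ k, |I k| * δ ^ k.natAbs ≤ (2 * B / δ * S + L) / A := by
    intro k
    rw [le_div_iff₀ hA]
    have s1 := step k (k+1) (by omega)
    have s2 := step k (k-1) (by omega)
    have s3 := hrec k
    have hd0 : 0 ≤ δ ^ k.natAbs := by positivity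
    have t1 : A * |I k| ≤ |A * I k - B * (I (k+1) + I (k-1))| + B * (|I (k+1)| + |I (k-1)|) := by
      have u1 := abs_add_le (A * I k - B * (I (k+1) + I (k-1))) (B * (I (k+1) + I (k-1)))
      rw [sub_add_cancel, abs_mul A, abs_of_pos hA, abs_mul B, abs_of_pos hB] at u1
      have u2 := mul_le_mul_of_nonneg_left (abs_add_le (I (k+1)) (I (k-1))) hB.le
      linarith
    have t2 := mul_le_mul_of_nonneg_right t1 hd0
    have t3 := mul_le_mul_of_nonneg_left (add_le_add s1 s2) hB.le
    have : 2 * B / δ * S = B * (S / δ + S / δ) := by ring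
    rw [this]
    linarith
  have hS2 : S ≤ (2 * B / δ * S + L) / A := ciSup_le hk
  rw [le_div_iff₀ hA] at hS2
  have h00 := hle 0
  simp at h00
  refine h00.trans ?_
  rw [le_div_iff₀ (by linarith)]
  linarith

lemma bessel_main {a b c : ℝ} (hb : 0 < b) (hc : 0 < c) (habc : b + c < a)
    (p q r : ℤ) (hpqr : p + q + r = 0) :
    Tendsto (fun T : ℝ => ∫ t in (0:ℝ)..T, bP a b c p q r t) atTop (𝓝 0) := by
  have ha : 0 < a := by linarith
  have hAB : 2 * (b * c) < a^2 - b^2 - c^2 := by nlinarith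
  have hB : 0 < b * c := mul_pos hb hc
  set A := a^2 - b^2 - c^2 with hA
  have hA0 : 0 < A := by linarith
  obtain ⟨δ, hδ1, hδ2⟩ := exists_between ((div_lt_one hA0).2 hAB)
  have hδ0 : 0 < δ := lt_trans (by positivity) hδ1
  have hABδ : 2 * (b * c) / δ < A := by
    rw [div_lt_iff₀ hA0] at hδ1
    rw [div_lt_iff₀ hδ0]; linarith
  obtain ⟨M, hM, hQ⟩ := bQ_decay ha hb hc
  obtain ⟨K, hK, hw⟩ := weight_bound δ hδ0 hδ2 q r
  have main : ∀ T : ℝ, 0 < T → |∫ t in (0:ℝ)..T, bP a b c p q r t| ≤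
      (M * (|(p:ℝ)| + 2) * K) / (A - 2 * (b * c) / δ) / √T := by
    intro T hT
    have := sup_arg A (b * c) δ ((M * (|(p:ℝ)| + 2) * K) / √T) (T * T) hB hδ0 hδ2 hABδ
      (fun k => ∫ t in (0:ℝ)..T, bP a b c p (q+k) (r-k) t)
      (fun k => bI_bound _ _ _ _ _ _ hT.le)
      (fun k => by
        have e := bI_rec ha.ne' hb.ne' hc.ne' p (q+k) (r-k) (by omega) hT.le
        rw [show q + k + 1 = q + (k+1) by ring, show r - k - 1 = r - (k+1) by ring,
          show q + k - 1 = q + (k-1) by ring, show r - k + 1 = r - (k-1) by ring] at e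
        rw [e]
        have h1 := hQ p (q+k) (r-k) T hT
        have hd0 : 0 ≤ δ ^ k.natAbs := by positivity
        refine (mul_le_mul_of_nonneg_right h1 hd0).trans ?_
        have h2 := mul_le_mul_of_nonneg_left (hw k)
          (by positivity : 0 ≤ M * (|(p:ℝ)| + 2) / √T)
        refine le_trans (le_of_eq ?_) (h2.trans (le_of_eq ?_)) <;> ring)
    simp only [add_zero, sub_zero] at this
    rwa [div_right_comm] at this
  apply squeeze_zero_norm' (a := fun T : ℝ => (M * (|(p:ℝ)| + 2) * K) / (A - 2 * (b * c) / δ) / √T)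
  · filter_upwards [eventually_gt_atTop 0] with T hT
    exact main T hT
  · exact Real.tendsto_sqrt_atTop.const_div_atTop _

theorem stmt_9 (ρ₁ ρ₂ ρ₃ : ℝ) (ℓ₁ ℓ₂ : ℤ)
    (h₁ : 0 < ρ₁) (h₂ : 0 < ρ₂) (h₃ : 0 < ρ₃)
    (hnotri : ρ₁ > ρ₂ + ρ₃ ∨ ρ₁ < |ρ₂ - ρ₃|) :
    Tendsto
      (fun T : ℝ => ∫ lam in (0:ℝ)..T,
        besselJ ℓ₁ (ρ₁ * lam) * besselJ ℓ₂ (ρ₂ * lam) *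
          besselJ (ℓ₁ + ℓ₂) (ρ₃ * lam) * lam)
      atTop (𝓝 0) := by
  have red : ∀ (a b c : ℝ) (p q r : ℤ), 0 < b → 0 < c → b + c < a → p + q + r = 0 →
      (∀ t, (-1) ^ (ℓ₁ + ℓ₂) * bP a b c p q r t = besselJ ℓ₁ (ρ₁ * t) * besselJ ℓ₂ (ρ₂ * t) *
          besselJ (ℓ₁ + ℓ₂) (ρ₃ * t) * t) →
      Tendsto
      (fun T : ℝ => ∫ lam in (0:ℝ)..T,
        besselJ ℓ₁ (ρ₁ * lam) * besselJ ℓ₂ (ρ₂ * lam) *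
          besselJ (ℓ₁ + ℓ₂) (ρ₃ * lam) * lam)
      atTop (𝓝 0) := by
    intro a b c p q r hb hc habc hpqr h
    have := (bessel_main hb hc habc p q r hpqr).const_mul ((-1 : ℝ) ^ (ℓ₁ + ℓ₂))
    rw [mul_zero] at this
    refine this.congr fun T => ?_
    rw [← intervalIntegral.integral_const_mul]
    exact intervalIntegral.integral_congr fun t _ => h t
  have hs : ((-1 : ℝ) ^ (ℓ₁ + ℓ₂)) * (-1 : ℝ) ^ (ℓ₁ + ℓ₂) = 1 := by
    rw [← mul_zpow]; simp
  rcases hnotri with h | h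
  · refine red ρ₁ ρ₂ ρ₃ ℓ₁ ℓ₂ (-(ℓ₁ + ℓ₂)) h₂ h₃ h (by ring) fun t => ?_
    unfold bP
    rw [bJ_neg]
    linear_combination (besselJ ℓ₁ (ρ₁ * t) * besselJ ℓ₂ (ρ₂ * t) *
          besselJ (ℓ₁ + ℓ₂) (ρ₃ * t) * t) * hs
  · rcases lt_abs.1 h with h | h
    · refine red ρ₂ ρ₁ ρ₃ ℓ₂ ℓ₁ (-(ℓ₁ + ℓ₂)) h₁ h₃ (by linarith) (by ring) fun t => ?_
      unfold bP
      rw [bJ_neg]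
      linear_combination (besselJ ℓ₁ (ρ₁ * t) * besselJ ℓ₂ (ρ₂ * t) *
            besselJ (ℓ₁ + ℓ₂) (ρ₃ * t) * t) * hs
    · refine red ρ₃ ρ₁ ρ₂ (-(ℓ₁ + ℓ₂)) ℓ₁ ℓ₂ h₁ h₂ (by linarith) (by ring) fun t => ?_
      unfold bP
      rw [bJ_neg]
      linear_combination (besselJ ℓ₁ (ρ₁ * t) * besselJ ℓ₂ (ρ₂ * t) *
            besselJ (ℓ₁ + ℓ₂) (ρ₃ * t) * t) * hs
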